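/- arXiv:2209.07203 — 4 statements merged into one kernel-verified Lean document; each statement's English description precedes it below -/
import Mathlib

section
/- Let (S,[-,-,-]) be a semiheap, φ : S → S a function, and suppose there exist a,b ∈ S such that the middle shift μ_{ab} : x ↦ [a,x,b] is injective. Then the twisted operation [x,y,z]_φ := [x, φ(y), z] is a semiheap operation on S if and only if φ is a warp of S. -/
section Semiheap

variable {S : Type*} {t : S → S → S → S} {φ : S → S}

/-- The half of the semiheap law that moves the bracket to the middle position; the entries of the
middle bracket appear in reversed order. -/
def IsMiddleAssoc (t : S → S → S → S) : Prop :=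
  ∀ a b c d e, t (t a b c) d e = t a (t d c b) e

/-- The half of the semiheap law that moves the bracket from the first to the last position. -/
def IsOuterAssoc (t : S → S → S → S) : Prop :=
  ∀ a b c d e, t (t a b c) d e = t a b (t c d e)

/-- `t` is a semiheap operation `[-,-,-]` on `S`. The chain of two equations in the semiheap law is
split into two equations with the same left-hand side. -/
def IsSemiheap (t : S → S → S → S) : Prop :=
  IsMiddleAssoc t ∧ IsOuterAssoc t

/-- `φ` is a warp of the ternary operation `t`, which is not required to be a semiheap. -/
def IsWarp (t : S → S → S → S) (φ : S → S) : Prop :=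
  ∀ x y z, φ (t x (φ y) z) = t (φ x) y (φ z)

/-- The twisted operation `[x,y,z]_φ = [x,φ(y),z]`. -/
def middleTwist (t : S → S → S → S) (φ : S → S) (x y z : S) : S :=
  t x (φ y) z

theorem IsOuterAssoc.middleTwist (ht : IsOuterAssoc t) (φ : S → S) :
    IsOuterAssoc (middleTwist t φ) :=
  fun a b c d e => ht a (φ b) c (φ d) e

-- The middle law of `t` turns `[[a,z,y]_φ,x,b]_φ` into `[a,[φ(x),y,φ(z)],b]`, so that both sides
-- of the middle law of the twist are middle shifts `μ_{ab}`.
theorem IsMiddleAssoc.middleTwist_iff (ht : IsMiddleAssoc t) :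
    IsMiddleAssoc (middleTwist t φ) ↔
      ∀ a b x y z, t a (φ (t x (φ y) z)) b = t a (t (φ x) y (φ z)) b := by
  have middle_bracket (a b x y z : S) :
      middleTwist t φ (middleTwist t φ a z y) x b = t a (t (φ x) y (φ z)) b :=
    ht a (φ z) y (φ x) b
  constructor
  · intro htwist a b x y z
    exact (htwist a z y x b).symm.trans (middle_bracket a b x y z)
  · intro hshift a z y x b
    exact (middle_bracket a b x y z).trans (hshift a b x y z).symm

theorem IsWarp.isMiddleAssoc_middleTwist (hφ : IsWarp t φ) (ht : IsMiddleAssoc t) :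
    IsMiddleAssoc (middleTwist t φ) :=
  ht.middleTwist_iff.2 fun a b x y z => congrArg (t a · b) (hφ x y z)

theorem IsMiddleAssoc.isWarp_of_middleTwist (ht : IsMiddleAssoc t)
    (hsep : Function.Injective fun x a b => t a x b) (htwist : IsMiddleAssoc (middleTwist t φ)) :
    IsWarp t φ :=
  fun x y z => hsep <| funext₂ fun a b => ht.middleTwist_iff.1 htwist a b x y z

-- `hsep` says that the middle shifts `μ_{ab}` jointly separate points.
theorem stmt_2_general (ht : IsSemiheap t) (hsep : Function.Injective fun x a b => t a x b) :
    IsSemiheap (middleTwist t φ) ↔ IsWarp t φ :=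
  ⟨fun htwist => ht.1.isWarp_of_middleTwist hsep htwist.1,
    fun hφ => ⟨hφ.isMiddleAssoc_middleTwist ht.1, ht.2.middleTwist φ⟩⟩

end Semiheap

/-- If `(S,t)` is a semiheap and some middle shift `μ_{ab} : x ↦ t a x b`
is injective, then the twisted operation `[x,y,z]_φ := t x (φ y) z` is a semiheap
operation iff `φ` is a warp. -/
theorem stmt_2 {S : Type*} (t : S → S → S → S)
    (h1 : ∀ a b c d e, t (t a b c) d e = t a (t d c b) e)
    (h2 : ∀ a b c d e, t (t a b c) d e = t a b (t c d e))
    (φ : S → S) (a b : S)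
    (hinj : Function.Injective (fun x => t a x b)) :
    ((∀ x y z d e, t (t x (φ y) z) (φ d) e = t x (φ (t d (φ z) y)) e) ∧
     (∀ x y z d e, t (t x (φ y) z) (φ d) e = t x (φ y) (t z (φ d) e)))
    ↔ (∀ x y z, φ (t x (φ y) z) = t (φ x) y (φ z)) :=
  stmt_2_general ⟨h1, h2⟩ fun _ _ h => hinj (congrFun₂ h a b)
end

section
/- Let (S,[-,-,-]) be an abelian semiheap. Then for every e ∈ S the middle shift μ_{ee} : x ↦ [e,x,e] is a warp of S, i.e. μ_{ee}([a, μ_{ee}(b), c]) = [μ_{ee}(a), b, μ_{ee}(c)] for all a,b,c ∈ S. -/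
theorem semiheap_middle_nested_eq_outer_nested {S : Type*} (t : S → S → S → S)
    (middle_assoc : ∀ a b c d e, t (t a b c) d e = t a (t d c b) e)
    (outer_assoc : ∀ a b c d e, t (t a b c) d e = t a b (t c d e))
    (p q r s a b c : S) :
    t p (t c (t q b r) a) s = t (t p a q) b (t r c s) :=
  calc
    t p (t c (t q b r) a) s
    _ = t (t p a (t q b r)) c s := (middle_assoc p a (t q b r) c s).symm
    _ = t (t (t p a q) b r) c s := by rw [outer_assoc p a q b r]
    _ = t (t p a q) b (t r c s) := outer_assoc (t p a q) b r c s

/-- In an abelian semiheap `(S,t)`, every middle shift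
`μ_{ee} : x ↦ t e x e` is a warp. -/
theorem stmt_3 {S : Type*} (t : S → S → S → S)
    (h1 : ∀ a b c d e, t (t a b c) d e = t a (t d c b) e)
    (h2 : ∀ a b c d e, t (t a b c) d e = t a b (t c d e))
    (habel : ∀ a b c, t a b c = t c b a)
    (e : S) :
    ∀ a b c, t e (t a (t e b e) c) e = t (t e a e) b (t e c e) := by
  intro a b c
  calc
    t e (t a (t e b e) c) e
    _ = t e (t c (t e b e) a) e := by rw [habel a]
    _ = t (t e a e) b (t e c e) :=
      semiheap_middle_nested_eq_outer_nested t h1 h2 e e e e a b c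
end

section
/- Let (S,[-,-,-]) be a semiheap and e, a ∈ S such that [e,a,x] = [a,e,x] = [x,e,a] = [x,a,e] for all x ∈ S. Then the middle shift μ_{ee} : x ↦ [e,x,e] is a switch for the semigroup (S, ∘_a), where x ∘_a y := [x,a,y]; that is, μ_{ee}(x ∘_a μ_{ee}(y) ∘_a z) = μ_{ee}(z) ∘_a y ∘_a μ_{ee}(x) for all x,y,z ∈ S. -/
/-!
Rebracketing with the semiheap laws turns both sides of the switch identity for `μ_{bc}` and `∘_a`
into left-normed products, `[[[[b,z,a],c,y],b,a],x,c]` and `[[[[b,z,c],a,y],a,b],x,c]`. These differ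
by exchanging `a` with `c` next to `z` and `b` with `a` next to `x`. The law
`[[p,q,r],s,u] = [p,[s,r,q],u]` reduces the first exchange to `[c,a,z] = [a,c,z]` and the second to
`[x,a,b] = [x,b,a]`.
-/

/-- A semiheap: the ternary operation `t x y z = [x,y,z]` is para-associative. -/
structure IsSemiheap_s8 {S : Type*} (t : S → S → S → S) : Prop where
  left_eq_mid : ∀ x y z u v, t (t x y z) u v = t x (t u z y) v
  left_eq_right : ∀ x y z u v, t (t x y z) u v = t x y (t z u v)

/-- The middle shift `μ_{bc}` of the ternary operation `t`. -/
def middleShift {S : Type*} (t : S → S → S → S) (b c x : S) : S := t b x c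

/-- A switch for a semigroup. The semigroup structure is an explicit argument because one carrier
has many retracts. -/
def IsSwitch {S : Type*} (_ : Semigroup S) (φ : S → S) : Prop :=
  ∀ x y z, φ (x * φ y * z) = φ z * y * φ x

namespace IsSemiheap_s8

variable {S : Type*} {t : S → S → S → S}

/-- The `a`-retract `(S, ∘_a)` of a semiheap. -/
abbrev retract (ht : IsSemiheap_s8 t) (a : S) : Semigroup S where
  mul x y := t x a y
  mul_assoc x y z := ht.left_eq_right x a y a z

theorem comm_third_fourth (ht : IsSemiheap_s8 t) {a c y : S} (hac : t c a y = t a c y) (x z : S) :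
    t (t x y a) c z = t (t x y c) a z := by
  rw [ht.left_eq_mid, hac, ← ht.left_eq_mid]

theorem comm_second_third (ht : IsSemiheap_s8 t) {a b y : S} (hab : t y a b = t y b a) (x z : S) :
    t (t x b a) y z = t (t x a b) y z := by
  rw [ht.left_eq_mid, hab, ← ht.left_eq_mid]

end IsSemiheap_s8

theorem stmt_8_general {S : Type*} {t : S → S → S → S} (ht : IsSemiheap_s8 t) {a b c : S}
    (hac : ∀ z, t c a z = t a c z) (hab : ∀ x, t x a b = t x b a) :
    IsSwitch (ht.retract a) (middleShift t b c) := by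
  intro x y z
  calc t b (t (t x a (t b y c)) a z) c
      = t (t b z a) (t x a (t b y c)) c := (ht.left_eq_mid ..).symm
    _ = t (t (t b z a) (t b y c) a) x c := (ht.left_eq_mid ..).symm
    _ = t (t (t (t b z a) c y) b a) x c := by rw [← ht.left_eq_mid (t b z a)]
    _ = t (t (t (t b z c) a y) b a) x c := by rw [ht.comm_third_fourth (hac z)]
    _ = t (t (t (t b z c) a y) a b) x c := ht.comm_second_third (hab x) ..
    _ = t (t (t b z c) a y) a (t b x c) := ht.left_eq_right ..

/-- If `e, a ∈ S` satisfy `[e,a,x] = [a,e,x] = [x,e,a] = [x,a,e]` for all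
`x`, then the middle shift `μ_{ee}` is a switch for the retract semigroup `(S, ∘_a)`,
`x ∘_a y := t x a y`. -/
theorem stmt_8 {S : Type*} (t : S → S → S → S)
    (h1 : ∀ a b c d e, t (t a b c) d e = t a (t d c b) e)
    (h2 : ∀ a b c d e, t (t a b c) d e = t a b (t c d e))
    (e a : S)
    (hc : ∀ x, t e a x = t a e x ∧ t a e x = t x e a ∧ t x e a = t x a e) :
    ∀ x y z, t e (t (t x a (t e y e)) a z) e = t (t (t e z e) a y) a (t e x e) :=
  stmt_8_general ⟨h1, h2⟩ (fun z ↦ (hc z).1) (fun x ↦ (hc x).2.2.symm)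
end

section
/- Let (D,[-,-,-]) be a diheap and let ψ : D → D be the function assigning to each a ∈ D the unique element ψ(a) such that (a, ψ(a)) is a biunit pair. Then ψ is an involution (ψ(ψ(a)) = a for all a), ψ is a semiheap automorphism satisfying ψ([a,b,c]) = [ψ(a), ψ(b), ψ(c)] for all a,b,c ∈ D (in particular ψ is a warp), and the twisted semiheap D_ψ = (D, [a,b,c]_ψ := [a, ψ(b), c]) is a heap, i.e. every element e ∈ D satisfies [e, ψ(e), x] = x = [x, ψ(e), e] for all x ∈ D. -/
/-!
In any semiheap, an element `y` is recovered from its position in the middle of a product by means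
of a biunit pair `(a, b)`: one has `y = [a, [a, y, b], b]`. Since `[d, b, a]` and `[b, a, d]` act as
`d` does when placed in the middle, `(b, a)` is again a biunit pair, so partners are unique.
A product of biunit pairs is a biunit pair, and uniqueness turns these two closure properties into
the statements that the partner map is an involution and a homomorphism.
-/

/-- A ternary operation that makes `S` a semiheap, with the chain
`[[a,b,c],d,e] = [a,[d,c,b],e] = [a,b,[c,d,e]]` recorded as two equations for its first term. -/
structure IsSemiheap_s19 {S : Type*} (t : S → S → S → S) : Prop where
  assoc_middle (a b c d e : S) : t (t a b c) d e = t a (t d c b) e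
  assoc_right (a b c d e : S) : t (t a b c) d e = t a b (t c d e)

/-- `(a, b)` is a biunit pair of the ternary operation `t`: it acts as the identity both on its
right and on its left. The order of `a` and `b` is part of the definition. -/
structure IsBiunitPair {S : Type*} (t : S → S → S → S) (a b : S) : Prop where
  left_unit (x : S) : t a b x = x
  right_unit (x : S) : t x a b = x

namespace IsBiunitPair

variable {S : Type*} {t : S → S → S → S} {a b c a' b' c' : S}

theorem sandwich_sandwich (hab : IsBiunitPair t a b) (ht : IsSemiheap_s19 t) (y : S) :
    t a (t a y b) b = y := by
  rw [← ht.assoc_middle, hab.right_unit, hab.left_unit]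

theorem eq_of_forall_middle_eq (hab : IsBiunitPair t a b) (ht : IsSemiheap_s19 t) {y z : S}
    (h : ∀ u v, t u y v = t u z v) : y = z := by
  rw [← hab.sandwich_sandwich ht y, h, hab.sandwich_sandwich ht]

theorem symm (hab : IsBiunitPair t a b) (ht : IsSemiheap_s19 t) : IsBiunitPair t b a where
  left_unit d := hab.eq_of_forall_middle_eq ht fun u v => calc
    t u (t b a d) v = t (t u d a) b v := (ht.assoc_middle u d a b v).symm
    _ = t u d (t a b v) := ht.assoc_right u d a b v
    _ = t u d v := by rw [hab.left_unit]
  right_unit d := hab.eq_of_forall_middle_eq ht fun u v => calc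
    t u (t d b a) v = t (t u a b) d v := (ht.assoc_middle u a b d v).symm
    _ = t u d v := by rw [hab.right_unit]

theorem partner_unique (hab : IsBiunitPair t a b) (hab' : IsBiunitPair t a b')
    (ht : IsSemiheap_s19 t) : b = b' := calc
  b = t b a b' := (hab'.right_unit b).symm
  _ = b' := (hab.symm ht).left_unit b'

theorem triple_product (ha : IsBiunitPair t a a') (hb : IsBiunitPair t b b')
    (hc : IsBiunitPair t c c') (ht : IsSemiheap_s19 t) :
    IsBiunitPair t (t a b c) (t a' b' c') where
  left_unit x := calc
    t (t a b c) (t a' b' c') x = t (t (t a b c) c' b') a' x := (ht.assoc_middle _ _ _ _ _).symm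
    _ = t (t a b (t c c' b')) a' x := by rw [ht.assoc_right a b c c' b']
    _ = x := by rw [hc.left_unit, hb.right_unit, ha.left_unit]
  right_unit x := calc
    t x (t a b c) (t a' b' c') = t (t x c b) a (t a' b' c') := (ht.assoc_middle _ _ _ _ _).symm
    _ = t (t (t x c b) a a') b' c' := (ht.assoc_right _ _ _ _ _).symm
    _ = t (t x c b) b' c' := by rw [ha.right_unit]
    _ = t x c (t b b' c') := ht.assoc_right _ _ _ _ _
    _ = x := by rw [hb.left_unit, hc.right_unit]

end IsBiunitPair

/-- Let `(D,t)` be a diheap with `ψ` assigning to each `a` its biunit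
partner. Then `ψ` is an involution and a semiheap automorphism (hence a warp), and the
twisted semiheap `[a,b,c]_ψ := t a (ψ b) c` is a heap. -/
theorem stmt_19 {D : Type*} (t : D → D → D → D)
    (h1 : ∀ a b c d e, t (t a b c) d e = t a (t d c b) e)
    (h2 : ∀ a b c d e, t (t a b c) d e = t a b (t c d e))
    (ψ : D → D)
    (hψ : ∀ a, (∀ x, t a (ψ a) x = x) ∧ (∀ x, t x a (ψ a) = x)) :
    (∀ a, ψ (ψ a) = a) ∧
    (∀ a b c, ψ (t a b c) = t (ψ a) (ψ b) (ψ c)) ∧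
    (∀ a b c, ψ (t a (ψ b) c) = t (ψ a) b (ψ c)) ∧
    (∀ e x, t e (ψ e) x = x ∧ t x (ψ e) e = x) := by
  have ht : IsSemiheap_s19 t := ⟨h1, h2⟩
  have pair (a : D) : IsBiunitPair t a (ψ a) := ⟨(hψ a).1, (hψ a).2⟩
  have invol (a : D) : ψ (ψ a) = a := (pair (ψ a)).partner_unique ((pair a).symm ht) ht
  have hom (a b c : D) : ψ (t a b c) = t (ψ a) (ψ b) (ψ c) :=
    (pair (t a b c)).partner_unique ((pair a).triple_product (pair b) (pair c) ht) ht
  have warp (a b c : D) : ψ (t a (ψ b) c) = t (ψ a) b (ψ c) := by rw [hom, invol]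
  exact ⟨invol, hom, warp, fun e x => ⟨(pair e).left_unit x, ((pair e).symm ht).right_unit x⟩⟩
end
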